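/- Let n ≥ 2 be an integer and λ a real number such that none of the numbers λ, λ − n/2 + 1, n/2 − λ, n − λ − 1, n − 2λ − 1, 2λ − n + 1 is a nonpositive integer, and such that λ − (n−3)/2 and (n+1)/2 − λ are not nonpositive integers. Set A = Γ(n/2)Γ(n − 2λ − 1)/(Γ(n/2 − λ)Γ(n − λ − 1)) and B = Γ(n/2)Γ(2λ − n + 1)/(Γ(λ)Γ(λ − n/2 + 1)). Then for every real s with 0 < s < 1, putting r = (1 − s)/(1 + s) (so that 0 < r < 1): (1 − r²)^λ · F(λ, λ − n/2 + 1; n/2; r²) = A · (4s)^λ · F(λ, (n−1)/2; λ − (n−3)/2; s²) + B · (4s)^{n−1−λ} · F((n−1)/2, n − λ − 1; (n+1)/2 − λ; s²). (This is the final identity in the proof of Proposition 4.1, expressing the radial hyperbolic eigenfunction in the coordinate s = (1−r)/(1+r).) -/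

import Mathlib

/-- Pochhammer symbol `(x)_k = x (x+1) ⋯ (x+k-1)`, with `(x)_0 = 1`. -/
noncomputable def poch (x : ℝ) : ℕ → ℝ
  | 0 => 1
  | k + 1 => poch x k * (x + k)

/-- Gauss hypergeometric series `F(a,b;c;x) = ∑_{k≥0} (a)_k (b)_k / ((c)_k k!) x^k`. -/
noncomputable def hypF (a b c x : ℝ) : ℝ :=
  ∑' k : ℕ, poch a k * poch b k / (poch c k * (k.factorial : ℝ)) * x ^ k

/-!
Put `b = (n - 1) / 2`. With `ρ = -log s` one has `r = tanh (ρ / 2)`, and both sides become, as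
functions of the hyperbolic distance `ρ`, solutions of the radial eigenvalue equation
`f'' + 2 b (coth ρ) f' + λ (2 b - λ) f = 0`: the left one is regular at `ρ = 0`, the two on the
right behave like `exp (-λ ρ)` and `exp (-(2 b - λ) ρ)` at infinity. The Wronskian of two
solutions times `sinh ρ ^ (2 * b)` is constant, so the connection coefficients are quotients of
such constants. Those of the right-hand pair are read off at infinity; those involving the left-hand
solution are read off at `ρ = 0`, where they are governed by the growth of `F(x)` as `x → 1`, which
follows from Euler's limit formula for `Γ` by comparing coefficients with `(1 - x) ^ (-ν)`.
Legendre's duplication formula turns the result into `A` and `B`.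
-/

open Filter Topology Set

section Hypergeometric

variable (a b c : ℝ)

/-- The coefficient of `x ^ k` in the Gauss hypergeometric series `hypF a b c x`. -/
noncomputable def hypCoeff (k : ℕ) : ℝ :=
  poch a k * poch b k / (poch c k * (k.factorial : ℝ))

theorem poch_eq_ascPochhammer_eval (x : ℝ) (k : ℕ) : poch x k = (ascPochhammer ℝ k).eval x := by
  induction k with
  | zero => simp [poch]
  | succ k ih => rw [poch, ih, ascPochhammer_succ_eval]

theorem poch_eq_prod_range (x : ℝ) (k : ℕ) : poch x k = ∏ j ∈ Finset.range k, (x + j) := by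
  induction k with
  | zero => rfl
  | succ k ih => rw [poch, ih, Finset.prod_range_succ]

theorem poch_succ_left (x : ℝ) (k : ℕ) : poch x (k + 1) = x * poch (x + 1) k := by
  rw [poch_eq_prod_range, poch_eq_prod_range, Finset.prod_range_succ', mul_comm]
  simp [add_assoc, add_comm (1 : ℝ)]

theorem poch_one (k : ℕ) : poch 1 k = k.factorial := by
  rw [poch_eq_ascPochhammer_eval, ascPochhammer_eval_one]

theorem poch_pos {x : ℝ} (hx : 0 < x) (k : ℕ) : 0 < poch x k := by
  rw [poch_eq_ascPochhammer_eval]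
  exact ascPochhammer_pos k x hx

theorem hypF_comm (x : ℝ) : hypF a b c x = hypF b a c x := by
  simp only [hypF, mul_comm (poch a _)]

theorem succ_mul_hypCoeff_succ (k : ℕ) :
    (k + 1) * hypCoeff a b c (k + 1) = a * b / c * hypCoeff (a + 1) (b + 1) (c + 1) k := by
  have hk : (k : ℝ) + 1 ≠ 0 := by positivity
  simp only [hypCoeff, poch_succ_left, Nat.factorial_succ, Nat.cast_mul, Nat.cast_succ]
  field_simp

theorem hypCoeff_recurrence {c : ℝ} (hc : ∀ k : ℕ, c ≠ -k) (k : ℕ) :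
    (c + k) * ((k + 1) * hypCoeff a b c (k + 1)) = (a + k) * (b + k) * hypCoeff a b c k := by
  have hck : c + k ≠ 0 := fun h => hc k (eq_neg_of_add_eq_zero_left h)
  simp only [hypCoeff, poch, Nat.factorial_succ, Nat.cast_mul, Nat.cast_succ]
  field_simp

theorem one_le_ordinaryHypergeometricSeries_radius :
    1 ≤ (ordinaryHypergeometricSeries ℝ a b c).radius := by
  by_cases h : ∀ k : ℕ, (k : ℝ) ≠ -a ∧ (k : ℝ) ≠ -b ∧ (k : ℝ) ≠ -c
  · exact (ordinaryHypergeometricSeries_radius_eq_one ℝ a b c h).ge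
  · simp only [not_forall, not_and_or, not_not, eq_comm (a := (Nat.cast _ : ℝ)),
      neg_eq_iff_eq_neg] at h
    obtain ⟨k, rfl | rfl | rfl⟩ := h
    · simp [ordinaryHypergeometric_radius_top_of_neg_nat₁]
    · simp [ordinaryHypergeometric_radius_top_of_neg_nat₂]
    · simp [ordinaryHypergeometric_radius_top_of_neg_nat₃]

theorem ordinaryHypergeometricSeries_apply_eq_hypCoeff (k : ℕ) (x : ℝ) :
    (ordinaryHypergeometricSeries ℝ a b c k fun _ => x) = hypCoeff a b c k * x ^ k := by
  rw [ordinaryHypergeometricSeries_apply_eq, hypCoeff, smul_eq_mul]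
  simp only [poch_eq_ascPochhammer_eval, div_eq_mul_inv, mul_inv]
  ring

theorem hypF_eq_ordinaryHypergeometric (x : ℝ) :
    hypF a b c x = ordinaryHypergeometric a b c x :=
  tsum_congr fun k => (ordinaryHypergeometricSeries_apply_eq_hypCoeff a b c k x).symm

theorem hypF_zero : hypF a b c 0 = 1 := by
  rw [hypF_eq_ordinaryHypergeometric, ordinaryHypergeometric_zero]

theorem hasFPowerSeriesOnBall_hypF :
    HasFPowerSeriesOnBall (hypF a b c) (ordinaryHypergeometricSeries ℝ a b c) 0 1 := by
  have hr := one_le_ordinaryHypergeometricSeries_radius a b c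
  rw [funext (hypF_eq_ordinaryHypergeometric a b c)]
  exact ((ordinaryHypergeometricSeries ℝ a b c).hasFPowerSeriesOnBall
    (one_pos.trans_le hr)).mono one_pos hr

variable {x : ℝ}

theorem mem_eball_zero_one (hx : |x| < 1) : x ∈ Metric.eball (0 : ℝ) 1 := by
  simpa [Metric.mem_eball, edist_dist, ENNReal.ofReal_lt_one] using hx

theorem hasSum_hypF (hx : |x| < 1) : HasSum (fun k => hypCoeff a b c k * x ^ k) (hypF a b c x) := by
  simpa only [ordinaryHypergeometricSeries_apply_eq_hypCoeff, zero_add] using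
    (hasFPowerSeriesOnBall_hypF a b c).hasSum (mem_eball_zero_one hx)

theorem analyticAt_hypF (hx : |x| < 1) : AnalyticAt ℝ (hypF a b c) x :=
  (hasFPowerSeriesOnBall_hypF a b c).analyticAt_of_mem (mem_eball_zero_one hx)

theorem ordinaryHypergeometricSeries_coeff (k : ℕ) :
    (ordinaryHypergeometricSeries ℝ a b c).coeff k = hypCoeff a b c k := by
  simpa using ordinaryHypergeometricSeries_apply_eq_hypCoeff a b c k 1

theorem hasSum_deriv_hypF (hx : |x| < 1) :
    HasSum (fun k : ℕ => (k + 1) * hypCoeff a b c (k + 1) * x ^ k) (deriv (hypF a b c) x) := by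
  have h := ((hasFPowerSeriesOnBall_hypF a b c).fderiv.hasSum (mem_eball_zero_one hx)).mapL
    (ContinuousLinearMap.apply ℝ ℝ (1 : ℝ))
  simpa [ordinaryHypergeometricSeries_coeff, mul_comm] using h

theorem deriv_hypF (hx : |x| < 1) :
    deriv (hypF a b c) x = a * b / c * hypF (a + 1) (b + 1) (c + 1) x := by
  refine (hasSum_deriv_hypF a b c hx).unique ?_
  simpa only [succ_mul_hypCoeff_succ, mul_assoc] using
    (hasSum_hypF (a + 1) (b + 1) (c + 1) hx).mul_left (a * b / c)

theorem hasSum_deriv_deriv_hypF (hx : |x| < 1) :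
    HasSum (fun k : ℕ => (k + 1) * ((k + 2) * hypCoeff a b c (k + 2)) * x ^ k)
      (deriv (deriv (hypF a b c)) x) := by
  have hd : deriv (hypF a b c) =ᶠ[𝓝 x] fun y => a * b / c * hypF (a + 1) (b + 1) (c + 1) y :=
    (continuous_abs.continuousAt.eventually_lt_const hx).mono fun _ => deriv_hypF a b c
  rw [hd.deriv_eq, deriv_const_mul_field]
  refine ((hasSum_deriv_hypF (a + 1) (b + 1) (c + 1) hx).mul_left (a * b / c)).congr_fun
    fun k => ?_
  have h := succ_mul_hypCoeff_succ a b c (k + 1)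
  push_cast at h
  linear_combination (k + 1) * x ^ k * h

theorem hasSum_natCast_mul_pow {u : ℕ → ℝ} {s : ℝ}
    (h : HasSum (fun k : ℕ => (k + 1) * u (k + 1) * x ^ k) s) :
    HasSum (fun k : ℕ => k * u k * x ^ k) (x * s) := by
  rw [← hasSum_nat_add_iff' 1]
  simpa [pow_succ', mul_left_comm x] using h.mul_left x

theorem hypF_hypergeometric_equation {c : ℝ} (hc : ∀ k : ℕ, c ≠ -k) (hx : |x| < 1) :
    x * (1 - x) * deriv (deriv (hypF a b c)) x + (c - (a + b + 1) * x) * deriv (hypF a b c) x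
      - a * b * hypF a b c x = 0 := by
  have h₀ := hasSum_hypF a b c hx
  have h₁ := hasSum_deriv_hypF a b c hx
  have h₂ := hasSum_deriv_deriv_hypF a b c hx
  have hx₁ := hasSum_natCast_mul_pow h₁
  have hx₂ : HasSum (fun k : ℕ => k * ((k + 1) * hypCoeff a b c (k + 1)) * x ^ k)
      (x * deriv (deriv (hypF a b c)) x) :=
    hasSum_natCast_mul_pow (u := fun k : ℕ => (k + 1) * hypCoeff a b c (k + 1))
      (by simpa [add_assoc, one_add_one_eq_two] using h₂)
  have hxx₂ : HasSum (fun k : ℕ => k * ((k - 1) * hypCoeff a b c k) * x ^ k)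
      (x * (x * deriv (deriv (hypF a b c)) x)) :=
    hasSum_natCast_mul_pow (u := fun k : ℕ => (k - 1) * hypCoeff a b c k)
      (by simpa [mul_left_comm] using hx₂)
  have h := (((hx₂.sub hxx₂).add (h₁.mul_left c)).sub (hx₁.mul_left (a + b + 1))).sub
    (h₀.mul_left (a * b))
  refine Eq.trans (by ring) (h.unique ?_)
  convert hasSum_zero using 2 with k
  linear_combination x ^ k * hypCoeff_recurrence a b hc k

end Hypergeometric

section Abelian

open Asymptotics

variable {u v : ℕ → ℝ}

theorem isLittleO_tsum_mul_pow (hv : ∀ k, 0 ≤ v k)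
    (hvs : ∀ x ∈ Ico (0 : ℝ) 1, Summable fun k => v k * x ^ k)
    (hvt : Tendsto (fun x => ∑' k, v k * x ^ k) (𝓝[<] 1) atTop) (huv : u =o[atTop] v) :
    (fun x => ∑' k, u k * x ^ k) =o[𝓝[<] (1 : ℝ)] fun x => ∑' k, v k * x ^ k := by
  refine isLittleO_iff.2 fun ε hε => ?_
  obtain ⟨N, hN⟩ := eventually_atTop.1 (isLittleO_iff.1 huv (half_pos hε))
  set C := ∑ k ∈ Finset.range N, |u k| with hC
  have hterm (k : ℕ) : |u k| ≤ (if k < N then |u k| else 0) + ε / 2 * v k := by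
    split_ifs with hk
    · exact le_add_of_nonneg_right (mul_nonneg (half_pos hε).le (hv k))
    · simpa [abs_of_nonneg (hv k)] using hN k (not_lt.1 hk)
  filter_upwards [hvt.eventually_ge_atTop (C / (ε / 2)), Ioo_mem_nhdsLT (zero_lt_one' ℝ)]
    with x hVC hx
  have hhead : HasSum (fun k => if k < N then |u k| else 0) C := by
    rw [hC, ← Finset.sum_congr rfl fun k hk => if_pos (Finset.mem_range.1 hk)]
    exact hasSum_sum_of_ne_finset_zero fun k hk => if_neg (Finset.mem_range.not.1 hk)
  have hbound : ‖∑' k, u k * x ^ k‖ ≤ C + ε / 2 * ∑' k, v k * x ^ k := by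
    refine tsum_of_norm_bounded (hhead.add ((hvs x ⟨hx.1.le, hx.2⟩).hasSum.mul_left _)) fun k => ?_
    have hxk : x ^ k ≤ 1 := pow_le_one₀ hx.1.le hx.2.le
    rw [norm_mul, Real.norm_eq_abs, Real.norm_of_nonneg (pow_nonneg hx.1.le k), ← mul_assoc]
    calc |u k| * x ^ k
        ≤ ((if k < N then |u k| else 0) + ε / 2 * v k) * x ^ k :=
          mul_le_mul_of_nonneg_right (hterm k) (pow_nonneg hx.1.le k)
      _ ≤ (if k < N then |u k| else 0) + ε / 2 * v k * x ^ k := by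
          rw [add_mul]
          gcongr
          exact mul_le_of_le_one_right (by split_ifs <;> positivity) hxk
  have hV : 0 ≤ ∑' k, v k * x ^ k := tsum_nonneg fun k => mul_nonneg (hv k) (pow_nonneg hx.1.le k)
  rw [Real.norm_of_nonneg hV]
  linarith [(div_le_iff₀' (half_pos hε)).1 hVC]

theorem tendsto_tsum_mul_pow_div (hv : ∀ k, 0 < v k)
    (hus : ∀ x ∈ Ico (0 : ℝ) 1, Summable fun k => u k * x ^ k)
    (hvs : ∀ x ∈ Ico (0 : ℝ) 1, Summable fun k => v k * x ^ k)
    (hvt : Tendsto (fun x => ∑' k, v k * x ^ k) (𝓝[<] 1) atTop) {l : ℝ}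
    (huv : Tendsto (fun k => u k / v k) atTop (𝓝 l)) :
    Tendsto (fun x => (∑' k, u k * x ^ k) / ∑' k, v k * x ^ k) (𝓝[<] 1) (𝓝 l) := by
  have hlo : (fun k => u k - l * v k) =o[atTop] v := by
    refine isLittleO_of_tendsto (fun k hk => absurd hk (hv k).ne') ?_
    simpa [sub_div, (hv _).ne'] using huv.sub_const l
  have h := (isLittleO_tsum_mul_pow (fun k => (hv k).le) hvs hvt hlo).tendsto_div_nhds_zero
  replace h := h.add_const l
  rw [zero_add] at h
  refine h.congr' ?_
  filter_upwards [hvt.eventually_gt_atTop 0, Ioo_mem_nhdsLT (zero_lt_one' ℝ)] with x hV hx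
  have hx' : x ∈ Ico (0 : ℝ) 1 := ⟨hx.1.le, hx.2⟩
  simp only [sub_mul, mul_assoc]
  rw [(hus x hx').tsum_sub ((hvs x hx').mul_left l), tsum_mul_left]
  field_simp
  ring

end Abelian

section Boundary

variable {a b c ν : ℝ}

theorem ne_neg_natCast_of_pos {y : ℝ} (hy : 0 < y) (k : ℕ) : y ≠ -k :=
  ((neg_nonpos.2 k.cast_nonneg).trans_lt hy).ne'

theorem hypF_one_one_eq_rpow {x : ℝ} (hx : |x| < 1) : hypF ν 1 1 x = (1 - x) ^ (-ν) := by
  have hone (k : ℕ) : (k : ℝ) ≠ -1 := by linarith [k.cast_nonneg (α := ℝ)]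
  have h := (Real.one_add_rpow_hasFPowerSeriesOnBall_zero (a := -ν)).hasSum
    (mem_eball_zero_one ((abs_neg x).trans_lt hx))
  rw [binomialSeries_eq_ordinaryHypergeometricSeries hone, neg_neg] at h
  refine (hasSum_hypF ν 1 1 hx).unique ?_
  simpa [-FormalMultilinearSeries.apply_eq_prod_smul_coeff, Function.comp_def,
    FormalMultilinearSeries.compContinuousLinearMap_apply,
    ordinaryHypergeometricSeries_apply_eq_hypCoeff, ← sub_eq_add_neg] using h

theorem tendsto_hypCoeff_succ_mul_rpow (ha : ∀ k : ℕ, a ≠ -k) (hb : ∀ k : ℕ, b ≠ -k) :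
    Tendsto (fun k : ℕ => hypCoeff a b c (k + 1) * (k : ℝ) ^ (c + 1 - a - b)) atTop
      (𝓝 (Real.Gamma c / (Real.Gamma a * Real.Gamma b))) := by
  -- Up to a power of `k`, the coefficient is a quotient of four Euler products `Real.GammaSeq`;
  -- the one at `1` comes from the factorial.
  have h := ((Real.GammaSeq_tendsto_Gamma c).mul (Real.GammaSeq_tendsto_Gamma 1)).div
    ((Real.GammaSeq_tendsto_Gamma a).mul (Real.GammaSeq_tendsto_Gamma b))
    (mul_ne_zero (Real.Gamma_ne_zero ha) (Real.Gamma_ne_zero hb))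
  rw [Real.Gamma_one, mul_one] at h
  refine h.congr' ?_
  filter_upwards [eventually_gt_atTop 0] with k hk
  have hk' : (0 : ℝ) < k := Nat.cast_pos.2 hk
  simp only [Pi.div_apply, Real.GammaSeq, ← poch_eq_prod_range, poch_one, hypCoeff,
    Real.rpow_sub hk', Real.rpow_add hk']
  field_simp

theorem tendsto_hypCoeff_div_mul_rpow (ha : ∀ k : ℕ, a ≠ -k) (hb : ∀ k : ℕ, b ≠ -k)
    (hν : 0 < ν) :
    Tendsto (fun k : ℕ => hypCoeff a b c (k + 1) / hypCoeff ν 1 1 (k + 1) *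
      (k : ℝ) ^ (ν - (a + b - c))) atTop
      (𝓝 (Real.Gamma c * Real.Gamma ν / (Real.Gamma a * Real.Gamma b))) := by
  have hνΓ := (Real.Gamma_pos_of_pos hν).ne'
  have h := (tendsto_hypCoeff_succ_mul_rpow (c := c) ha hb).div
    (tendsto_hypCoeff_succ_mul_rpow (c := 1) (ne_neg_natCast_of_pos hν)
      (ne_neg_natCast_of_pos one_pos)) (by simp [hνΓ])
  simp only [Real.Gamma_one, mul_one, one_div, div_inv_eq_mul, div_mul_eq_mul_div] at h
  refine h.congr' ?_
  filter_upwards [eventually_gt_atTop 0] with k hk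
  have hk' : (0 : ℝ) < k := Nat.cast_pos.2 hk
  rw [Pi.div_apply, mul_div_mul_comm, ← Real.rpow_sub hk']
  ring_nf

theorem tendsto_one_sub_rpow_mul_hypF_of_hypCoeff (hν : 0 < ν) {l : ℝ}
    (h : Tendsto (fun k : ℕ => hypCoeff a b c (k + 1) / hypCoeff ν 1 1 (k + 1)) atTop (𝓝 l)) :
    Tendsto (fun x => (1 - x) ^ ν * hypF a b c x) (𝓝[<] 1) (𝓝 l) := by
  have hlt {x : ℝ} (hx : x ∈ Ico (0 : ℝ) 1) : |x| < 1 := abs_lt.2 ⟨by linarith [hx.1], hx.2⟩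
  have hpos (k : ℕ) : 0 < hypCoeff ν 1 1 k :=
    div_pos (mul_pos (poch_pos hν k) (poch_pos one_pos k))
      (mul_pos (poch_pos one_pos k) (Nat.cast_pos.2 k.factorial_pos))
  have hbinom {x : ℝ} (hx : x ∈ Ioo (0 : ℝ) 1) : (1 - x) ^ (-ν) = hypF ν 1 1 x :=
    (hypF_one_one_eq_rpow (hlt ⟨hx.1.le, hx.2⟩)).symm
  have hIoo : ∀ᶠ x in 𝓝[<] (1 : ℝ), x ∈ Ioo (0 : ℝ) 1 := Ioo_mem_nhdsLT one_pos
  have hsub : Tendsto (fun x : ℝ => 1 - x) (𝓝[<] 1) (𝓝[>] 0) :=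
    tendsto_nhdsWithin_of_tendsto_nhds_of_eventually_within _
      (((continuous_const.sub continuous_id).tendsto' 1 0 (sub_self 1)).mono_left
        nhdsWithin_le_nhds)
      (eventually_mem_nhdsWithin.mono fun _ hx => mem_Ioi.2 (sub_pos.2 hx))
  have hatTop : Tendsto (hypF ν 1 1) (𝓝[<] 1) atTop :=
    ((tendsto_rpow_neg_nhdsGT_zero (neg_lt_zero.2 hν)).comp hsub).congr' (hIoo.mono fun _ => hbinom)
  have hquot := tendsto_tsum_mul_pow_div hpos
    (fun x hx => (hasSum_hypF a b c (hlt hx)).summable)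
    (fun x hx => (hasSum_hypF ν 1 1 (hlt hx)).summable) hatTop ((tendsto_add_atTop_iff_nat 1).1 h)
  refine hquot.congr' (hIoo.mono fun x hx => ?_)
  change hypF a b c x / hypF ν 1 1 x = _
  rw [← hbinom hx, Real.rpow_neg (sub_nonneg.2 hx.2.le), div_inv_eq_mul, mul_comm]

theorem tendsto_one_sub_rpow_mul_hypF (ha : ∀ k : ℕ, a ≠ -k) (hb : ∀ k : ℕ, b ≠ -k)
    (hν : 0 < a + b - c) :
    Tendsto (fun x => (1 - x) ^ (a + b - c) * hypF a b c x) (𝓝[<] 1)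
      (𝓝 (Real.Gamma c * Real.Gamma (a + b - c) / (Real.Gamma a * Real.Gamma b))) :=
  tendsto_one_sub_rpow_mul_hypF_of_hypCoeff hν (by
    simpa using tendsto_hypCoeff_div_mul_rpow (c := c) ha hb hν)

theorem tendsto_one_sub_rpow_mul_hypF_zero (ha : ∀ k : ℕ, a ≠ -k) (hb : ∀ k : ℕ, b ≠ -k)
    (hν : 0 < ν) (habc : a + b - c < ν) :
    Tendsto (fun x => (1 - x) ^ ν * hypF a b c x) (𝓝[<] 1) (𝓝 0) := by
  refine tendsto_one_sub_rpow_mul_hypF_of_hypCoeff hν ?_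
  have hdecay : Tendsto (fun k : ℕ => (k : ℝ) ^ (-(ν - (a + b - c)))) atTop (𝓝 0) :=
    (tendsto_rpow_neg_atTop (sub_pos.2 habc)).comp tendsto_natCast_atTop_atTop
  have h := (tendsto_hypCoeff_div_mul_rpow (c := c) ha hb hν).mul hdecay
  rw [mul_zero] at h
  refine h.congr' ?_
  filter_upwards [eventually_gt_atTop 0] with k hk
  rw [mul_assoc, ← Real.rpow_add (Nat.cast_pos.2 hk), add_neg_cancel, Real.rpow_zero, mul_one]

end Boundary

section Radial

variable {b κ : ℝ} {f g : ℝ → ℝ}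

/-- `f` is, as a function of the hyperbolic distance `ρ > 0` to a base point, a radial
eigenfunction of the Laplacian with eigenvalue `-κ`, in hyperbolic space of dimension `2 * b + 1`:
`f'' + 2 b (coth ρ) f' + κ f = 0`. The "dimension" may be any real number. -/
def IsRadialEigenfunction (b κ : ℝ) (f : ℝ → ℝ) : Prop :=
  ∀ ρ, 0 < ρ → DifferentiableAt ℝ f ρ ∧
    HasDerivAt (deriv f) (-(2 * b * (Real.cosh ρ / Real.sinh ρ) * deriv f ρ) - κ * f ρ) ρ

/-- The Wronskian of two radial functions, weighted by the density `sinh ρ ^ (2 * b)` of the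
hyperbolic volume in polar coordinates. -/
noncomputable def radialWronskian (b : ℝ) (f g : ℝ → ℝ) (ρ : ℝ) : ℝ :=
  Real.sinh ρ ^ (2 * b) * (f ρ * deriv g ρ - deriv f ρ * g ρ)

theorem radialWronskian_mul_eq (u : ℝ → ℝ) (ρ : ℝ) :
    radialWronskian b f g ρ * u ρ =
      radialWronskian b u g ρ * f ρ - radialWronskian b u f ρ * g ρ := by
  simp only [radialWronskian]
  ring

theorem IsRadialEigenfunction.hasDerivAt_radialWronskian (hf : IsRadialEigenfunction b κ f)
    (hg : IsRadialEigenfunction b κ g) {ρ : ℝ} (hρ : 0 < ρ) :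
    HasDerivAt (radialWronskian b f g) 0 ρ := by
  have hs : 0 < Real.sinh ρ := Real.sinh_pos_iff.2 hρ
  obtain ⟨hf₁, hf₂⟩ := hf ρ hρ
  obtain ⟨hg₁, hg₂⟩ := hg ρ hρ
  refine (((Real.hasDerivAt_sinh ρ).rpow_const (p := 2 * b) (.inl hs.ne')).mul
    ((hf₁.hasDerivAt.mul hg₂).sub (hf₂.mul hg₁.hasDerivAt))).congr_deriv ?_
  simp only [Pi.sub_apply, Pi.mul_apply]
  rw [Real.rpow_sub_one hs.ne']
  field_simp
  ring

theorem IsRadialEigenfunction.radialWronskian_eq_of_tendsto (hf : IsRadialEigenfunction b κ f)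
    (hg : IsRadialEigenfunction b κ g) {l : Filter ℝ} [l.NeBot] (hl : ∀ᶠ ρ in l, 0 < ρ) {w : ℝ}
    (hw : Tendsto (radialWronskian b f g) l (𝓝 w)) {ρ : ℝ} (hρ : 0 < ρ) :
    radialWronskian b f g ρ = w := by
  have hderiv {σ : ℝ} (hσ : 0 < σ) := hf.hasDerivAt_radialWronskian hg hσ
  have hconst {σ : ℝ} (hσ : 0 < σ) : radialWronskian b f g σ = radialWronskian b f g ρ :=
    isOpen_Ioi.is_const_of_deriv_eq_zero isPreconnected_Ioi
      (fun σ hσ => (hderiv hσ).differentiableAt.differentiableWithinAt)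
      (fun σ hσ => (hderiv hσ).deriv) hσ hρ
  exact tendsto_nhds_unique (tendsto_const_nhds.congr' (hl.mono fun σ hσ => (hconst hσ).symm)) hw

variable {E η φ φ' F : ℝ → ℝ}

theorem hasDerivAt_mul_comp {ρ : ℝ} (hE : HasDerivAt E (η ρ * E ρ) ρ) (hφ : HasDerivAt φ (φ' ρ) ρ)
    (hF : DifferentiableAt ℝ F (φ ρ)) :
    HasDerivAt (fun ρ => E ρ * F (φ ρ)) (E ρ * (η ρ * F (φ ρ) + φ' ρ * deriv F (φ ρ))) ρ := by
  refine (hE.mul (hF.hasDerivAt.comp ρ hφ)).congr_deriv ?_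
  simp only [Function.comp_apply]
  ring

theorem isRadialEigenfunction_mul_comp {η' φ'' : ℝ → ℝ}
    (hE : ∀ ρ, 0 < ρ → HasDerivAt E (η ρ * E ρ) ρ) (hη : ∀ ρ, 0 < ρ → HasDerivAt η (η' ρ) ρ)
    (hφ : ∀ ρ, 0 < ρ → HasDerivAt φ (φ' ρ) ρ) (hφ' : ∀ ρ, 0 < ρ → HasDerivAt φ' (φ'' ρ) ρ)
    (hF : ∀ ρ, 0 < ρ → AnalyticAt ℝ F (φ ρ))
    (hode : ∀ ρ, 0 < ρ →
      (η ρ ^ 2 + η' ρ + 2 * b * (Real.cosh ρ / Real.sinh ρ) * η ρ + κ) * F (φ ρ) +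
      (2 * η ρ * φ' ρ + φ'' ρ + 2 * b * (Real.cosh ρ / Real.sinh ρ) * φ' ρ) * deriv F (φ ρ) +
      φ' ρ ^ 2 * deriv (deriv F) (φ ρ) = 0) :
    IsRadialEigenfunction b κ fun ρ => E ρ * F (φ ρ) := by
  have hd {ρ : ℝ} (hρ : 0 < ρ) :=
    hasDerivAt_mul_comp (hE ρ hρ) (hφ ρ hρ) (hF ρ hρ).differentiableAt
  intro ρ hρ
  refine ⟨(hd hρ).differentiableAt, ?_⟩
  have hF₁ := (hF ρ hρ).differentiableAt.hasDerivAt.comp ρ (hφ ρ hρ)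
  have hF₂ := (hF ρ hρ).deriv.differentiableAt.hasDerivAt.comp ρ (hφ ρ hρ)
  have hd₂ := (hE ρ hρ).mul (((hη ρ hρ).mul hF₁).add ((hφ' ρ hρ).mul hF₂))
  rw [(hd hρ).deriv]
  refine HasDerivAt.congr_of_eventuallyEq ?_
    ((eventually_gt_nhds hρ).mono fun σ hσ => (hd hσ).deriv)
  refine hd₂.congr_deriv ?_
  simp only [Pi.add_apply, Pi.mul_apply, Function.comp_apply]
  linear_combination E ρ * hode ρ hρ

end Radial

section HarishChandra

variable (a b : ℝ)

/-- The Harish-Chandra series: the radial eigenfunction that behaves like `exp (-a * ρ)` at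
infinity. -/
noncomputable def harishChandraSeries (ρ : ℝ) : ℝ :=
  Real.exp (-a * ρ) * hypF a b (a - b + 1) (Real.exp (-2 * ρ))

theorem abs_exp_neg_two_mul_lt_one {ρ : ℝ} (hρ : 0 < ρ) : |Real.exp (-2 * ρ)| < 1 := by
  rw [Real.abs_exp, Real.exp_lt_one_iff]
  linarith

theorem hasDerivAt_exp_mul (m ρ : ℝ) :
    HasDerivAt (fun ρ => Real.exp (m * ρ)) (m * Real.exp (m * ρ)) ρ := by
  simpa [mul_comm] using ((hasDerivAt_id ρ).const_mul m).exp

theorem deriv_harishChandraSeries {ρ : ℝ} (hρ : 0 < ρ) :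
    deriv (harishChandraSeries a b) ρ =
      Real.exp (-a * ρ) * (-a * hypF a b (a - b + 1) (Real.exp (-2 * ρ)) +
        -2 * Real.exp (-2 * ρ) * deriv (hypF a b (a - b + 1)) (Real.exp (-2 * ρ))) :=
  (hasDerivAt_mul_comp (η := fun _ => -a) (φ' := fun ρ => -2 * Real.exp (-2 * ρ))
    (hasDerivAt_exp_mul (-a) ρ) (hasDerivAt_exp_mul (-2) ρ)
    (analyticAt_hypF _ _ _ (abs_exp_neg_two_mul_lt_one hρ)).differentiableAt).deriv

theorem cosh_div_sinh_eq_exp (ρ : ℝ) :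
    Real.cosh ρ / Real.sinh ρ = (1 + Real.exp (-2 * ρ)) / (1 - Real.exp (-2 * ρ)) := by
  have h : Real.exp (-2 * ρ) = Real.exp (-ρ) * Real.exp (-ρ) := by rw [← Real.exp_add]; ring_nf
  rw [Real.cosh_eq, Real.sinh_eq, h, div_div_div_cancel_right₀ two_ne_zero,
    ← mul_div_mul_left _ _ (Real.exp_ne_zero (-ρ)), mul_add, mul_sub, ← Real.exp_add,
    neg_add_cancel, Real.exp_zero]

variable {a}

theorem isRadialEigenfunction_harishChandraSeries (hc : ∀ k : ℕ, a - b + 1 ≠ -k) :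
    IsRadialEigenfunction b (a * (2 * b - a)) (harishChandraSeries a b) := by
  refine isRadialEigenfunction_mul_comp (η := fun _ => -a) (η' := fun _ => 0)
    (φ' := fun ρ => -2 * Real.exp (-2 * ρ)) (φ'' := fun ρ => -2 * (-2 * Real.exp (-2 * ρ)))
    (fun ρ _ => hasDerivAt_exp_mul (-a) ρ) (fun ρ _ => hasDerivAt_const ρ _)
    (fun ρ _ => hasDerivAt_exp_mul (-2) ρ) (fun ρ _ => (hasDerivAt_exp_mul (-2) ρ).const_mul _)
    (fun ρ hρ => analyticAt_hypF _ _ _ (abs_exp_neg_two_mul_lt_one hρ)) fun ρ hρ => ?_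
  have hx := abs_exp_neg_two_mul_lt_one hρ
  have hode := hypF_hypergeometric_equation a b hc hx
  rw [cosh_div_sinh_eq_exp]
  set x := Real.exp (-2 * ρ)
  have hx₁ : 1 - x ≠ 0 := (sub_pos.2 (lt_of_abs_lt hx)).ne'
  field_simp
  linear_combination 4 * x * hode

end HarishChandra

section HarishChandraAsymptotics

theorem sinh_eq_exp_mul (ρ : ℝ) : Real.sinh ρ = Real.exp ρ * ((1 - Real.exp (-2 * ρ)) / 2) := by
  rw [Real.sinh_eq, ← mul_div_assoc, mul_sub, mul_one, ← Real.exp_add]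
  ring_nf

theorem sinh_rpow_eq {ρ : ℝ} (hρ : 0 < ρ) (p : ℝ) :
    Real.sinh ρ ^ p = Real.exp (p * ρ) * ((1 - Real.exp (-2 * ρ)) / 2) ^ p := by
  have h := lt_of_abs_lt (abs_exp_neg_two_mul_lt_one hρ)
  rw [sinh_eq_exp_mul, Real.mul_rpow (Real.exp_pos ρ).le (by linarith), ← Real.exp_mul, mul_comm ρ]

variable (a b : ℝ)

theorem tendsto_exp_neg_two_mul_atTop : Tendsto (fun ρ : ℝ => Real.exp (-2 * ρ)) atTop (𝓝 0) :=
  Real.tendsto_exp_atBot.comp (tendsto_id.const_mul_atTop_of_neg (by norm_num))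

theorem tendsto_exp_mul_harishChandraSeries_atTop :
    Tendsto (fun ρ => Real.exp (a * ρ) * harishChandraSeries a b ρ) atTop (𝓝 1) := by
  have h := (analyticAt_hypF a b (a - b + 1) (by simp)).continuousAt.tendsto.comp
    tendsto_exp_neg_two_mul_atTop
  rw [hypF_zero] at h
  refine h.congr fun ρ => ?_
  rw [harishChandraSeries, ← mul_assoc, ← Real.exp_add, neg_mul, add_neg_cancel, Real.exp_zero,
    one_mul, Function.comp_apply]

theorem tendsto_exp_mul_deriv_harishChandraSeries_atTop :
    Tendsto (fun ρ => Real.exp (a * ρ) * deriv (harishChandraSeries a b) ρ) atTop (𝓝 (-a)) := by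
  have hx := tendsto_exp_neg_two_mul_atTop
  have hF := analyticAt_hypF a b (a - b + 1) (x := 0) (by simp)
  have h := ((hF.continuousAt.tendsto.comp hx).const_mul (-a)).add
    ((hx.const_mul (-2)).mul (hF.deriv.continuousAt.tendsto.comp hx))
  simp only [hypF_zero, mul_zero, zero_mul, add_zero, mul_one] at h
  refine h.congr' ((eventually_gt_atTop 0).mono fun ρ hρ => ?_)
  simp only [deriv_harishChandraSeries a b hρ, Function.comp_apply]
  rw [← mul_assoc, ← Real.exp_add, ← add_mul, add_neg_cancel, zero_mul, Real.exp_zero, one_mul]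

theorem tendsto_radialWronskian_harishChandraSeries_atTop :
    Tendsto (radialWronskian b (harishChandraSeries a b) (harishChandraSeries (2 * b - a) b)) atTop
      (𝓝 ((1 / 2) ^ (2 * b) * (2 * (a - b)))) := by
  have hsinh : Tendsto (fun ρ => ((1 - Real.exp (-2 * ρ)) / 2) ^ (2 * b)) atTop
      (𝓝 ((1 / 2) ^ (2 * b))) := by
    have h := (tendsto_exp_neg_two_mul_atTop.const_sub 1).div_const 2
    rw [sub_zero] at h
    exact h.rpow_const (.inl (by norm_num))
  have h := hsinh.mul
    (((tendsto_exp_mul_harishChandraSeries_atTop a b).mul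
      (tendsto_exp_mul_deriv_harishChandraSeries_atTop (2 * b - a) b)).sub
    ((tendsto_exp_mul_deriv_harishChandraSeries_atTop a b).mul
      (tendsto_exp_mul_harishChandraSeries_atTop (2 * b - a) b)))
  convert h.congr' ?_ using 2
  · ring
  · filter_upwards [eventually_gt_atTop 0] with ρ hρ
    have hexp : Real.exp (2 * b * ρ) = Real.exp (a * ρ) * Real.exp ((2 * b - a) * ρ) := by
      rw [← Real.exp_add]
      ring_nf
    rw [radialWronskian, sinh_rpow_eq hρ, hexp]
    ring

theorem tendsto_sinh_rpow_mul_comp_exp {p l : ℝ} {G : ℝ → ℝ}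
    (hG : Tendsto (fun x => (1 - x) ^ p * G x) (𝓝[<] 1) (𝓝 l)) :
    Tendsto (fun ρ => Real.sinh ρ ^ p * G (Real.exp (-2 * ρ))) (𝓝[>] 0) (𝓝 ((1 / 2) ^ p * l)) := by
  have hx : Tendsto (fun ρ : ℝ => Real.exp (-2 * ρ)) (𝓝[>] 0) (𝓝[<] 1) :=
    tendsto_nhdsWithin_of_tendsto_nhds_of_eventually_within _
      ((Continuous.tendsto' (by fun_prop) 0 1 (by simp)).mono_left nhdsWithin_le_nhds)
      (eventually_mem_nhdsWithin.mono fun ρ hρ =>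
        lt_of_abs_lt (abs_exp_neg_two_mul_lt_one (mem_Ioi.1 hρ)))
  have hexp : Tendsto (fun ρ : ℝ => Real.exp (p * ρ) * (1 / 2) ^ p) (𝓝[>] 0) (𝓝 ((1 / 2) ^ p)) :=
    (Continuous.tendsto' (by fun_prop) 0 _ (by simp)).mono_left nhdsWithin_le_nhds
  refine (hexp.mul (hG.comp hx)).congr' (eventually_mem_nhdsWithin.mono fun ρ hρ => ?_)
  have hlt := lt_of_abs_lt (abs_exp_neg_two_mul_lt_one (mem_Ioi.1 hρ))
  beta_reduce
  rw [sinh_rpow_eq hρ, div_eq_mul_one_div (1 - _), Real.mul_rpow (sub_pos.2 hlt).le (by norm_num),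
    Function.comp_apply]
  ring

variable {a b}

theorem tendsto_sinh_rpow_mul_harishChandraSeries_zero (hb : 0 < b) (ha : ∀ k : ℕ, a ≠ -k) :
    Tendsto (fun ρ => Real.sinh ρ ^ (2 * b) * harishChandraSeries a b ρ) (𝓝[>] 0) (𝓝 0) := by
  have hF := tendsto_sinh_rpow_mul_comp_exp (tendsto_one_sub_rpow_mul_hypF_zero (ν := 2 * b)
    (c := a - b + 1) ha (ne_neg_natCast_of_pos hb) (by linarith) (by linarith))
  have hexp : Tendsto (fun ρ : ℝ => Real.exp (-a * ρ)) (𝓝[>] 0) (𝓝 1) :=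
    (Continuous.tendsto' (by fun_prop) 0 1 (by simp)).mono_left nhdsWithin_le_nhds
  have h := hexp.mul hF
  rw [mul_zero, mul_zero] at h
  exact h.congr fun ρ => by rw [harishChandraSeries, mul_left_comm]

theorem tendsto_one_sub_rpow_mul_deriv_hypF (hb : 0 < b) (ha : ∀ k : ℕ, a ≠ -k)
    (hc : ∀ k : ℕ, a - b + 1 ≠ -k) :
    Tendsto (fun x => (1 - x) ^ (2 * b) * deriv (hypF a b (a - b + 1)) x) (𝓝[<] 1)
      (𝓝 (Real.Gamma (a - b + 1) * Real.Gamma (2 * b) / (Real.Gamma a * Real.Gamma b))) := by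
  have hν : a + 1 + (b + 1) - (a - b + 1 + 1) = 2 * b := by ring
  have ha₀ : a ≠ 0 := by simpa using ha 0
  have hc₀ : a - b + 1 ≠ 0 := by simpa using hc 0
  have hΓa := Real.Gamma_ne_zero ha
  have hΓb := (Real.Gamma_pos_of_pos hb).ne'
  have ha₁ (k : ℕ) : a + 1 ≠ -k := fun h => ha (k + 1) (by push_cast; linarith)
  have h := (tendsto_one_sub_rpow_mul_hypF (c := a - b + 1 + 1) ha₁
    (ne_neg_natCast_of_pos (by positivity : 0 < b + 1)) (by linarith)).const_mul
      (a * b / (a - b + 1))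
  rw [hν, Real.Gamma_add_one ha₀, Real.Gamma_add_one hb.ne', Real.Gamma_add_one hc₀] at h
  convert h.congr' ?_ using 2
  · field_simp
  · filter_upwards [Ioo_mem_nhdsLT (zero_lt_one' ℝ)] with x hx
    rw [deriv_hypF a b (a - b + 1) (abs_lt.2 ⟨by linarith [hx.1], hx.2⟩)]
    ring

theorem tendsto_sinh_rpow_mul_deriv_harishChandraSeries_zero (hb : 0 < b) (ha : ∀ k : ℕ, a ≠ -k)
    (hc : ∀ k : ℕ, a - b + 1 ≠ -k) :
    Tendsto (fun ρ => Real.sinh ρ ^ (2 * b) * deriv (harishChandraSeries a b) ρ) (𝓝[>] 0)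
      (𝓝 (-2 * ((1 / 2) ^ (2 * b) * (Real.Gamma (a - b + 1) * Real.Gamma (2 * b) /
        (Real.Gamma a * Real.Gamma b))))) := by
  have hF := tendsto_sinh_rpow_mul_harishChandraSeries_zero hb ha
  have hF' := tendsto_sinh_rpow_mul_comp_exp (tendsto_one_sub_rpow_mul_deriv_hypF hb ha hc)
  have hexp : Tendsto (fun ρ : ℝ => -2 * Real.exp (-a * ρ) * Real.exp (-2 * ρ)) (𝓝[>] 0)
      (𝓝 (-2)) :=
    (Continuous.tendsto' (by fun_prop) 0 _ (by simp)).mono_left nhdsWithin_le_nhds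
  have h := (hF.const_mul (-a)).add (hexp.mul hF')
  rw [mul_zero, zero_add] at h
  refine h.congr' (eventually_mem_nhdsWithin.mono fun ρ hρ => ?_)
  beta_reduce
  rw [deriv_harishChandraSeries a b hρ, harishChandraSeries]
  ring

end HarishChandraAsymptotics

section Spherical

variable (a b : ℝ)

/-- The radial eigenfunction that is smooth at the origin and takes the value `1` there, written
in terms of the Euclidean radius `tanh (ρ / 2)` in the Poincaré ball. -/
noncomputable def sphericalFunction (ρ : ℝ) : ℝ :=
  (1 - Real.tanh (ρ / 2) ^ 2) ^ a * hypF a (a - b + 1 / 2) (b + 1 / 2) (Real.tanh (ρ / 2) ^ 2)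

theorem hasDerivAt_tanh_half (ρ : ℝ) :
    HasDerivAt (fun ρ => Real.tanh (ρ / 2)) ((1 - Real.tanh (ρ / 2) ^ 2) / 2) ρ := by
  have hhalf := (hasDerivAt_id ρ).div_const 2
  have hcosh := (Real.cosh_pos (ρ / 2)).ne'
  simp only [Real.tanh_eq_sinh_div_cosh]
  refine (hhalf.sinh.div hhalf.cosh hcosh).congr_deriv ?_
  simp only [id]
  field_simp

theorem hasDerivAt_tanh_half_sq (ρ : ℝ) :
    HasDerivAt (fun ρ => Real.tanh (ρ / 2) ^ 2)
      (Real.tanh (ρ / 2) * (1 - Real.tanh (ρ / 2) ^ 2)) ρ := by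
  refine ((hasDerivAt_tanh_half ρ).pow 2).congr_deriv ?_
  push_cast
  ring

theorem hasDerivAt_one_sub_tanh_half_sq_rpow (ρ : ℝ) :
    HasDerivAt (fun ρ => (1 - Real.tanh (ρ / 2) ^ 2) ^ a)
      (-a * Real.tanh (ρ / 2) * (1 - Real.tanh (ρ / 2) ^ 2) ^ a) ρ := by
  have hpos : 0 < 1 - Real.tanh (ρ / 2) ^ 2 := sub_pos.2 (Real.tanh_sq_lt_one _)
  refine (((hasDerivAt_tanh_half_sq ρ).const_sub 1).rpow_const (.inl hpos.ne')).congr_deriv ?_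
  rw [Real.rpow_sub_one hpos.ne']
  field_simp

theorem abs_tanh_sq_lt_one (ρ : ℝ) : |Real.tanh ρ ^ 2| < 1 := by
  rw [abs_of_nonneg (sq_nonneg _)]
  exact Real.tanh_sq_lt_one ρ

theorem hasDerivAt_sphericalFunction (ρ : ℝ) :
    HasDerivAt (sphericalFunction a b)
      ((1 - Real.tanh (ρ / 2) ^ 2) ^ a *
        (-a * Real.tanh (ρ / 2) *
          hypF a (a - b + 1 / 2) (b + 1 / 2) (Real.tanh (ρ / 2) ^ 2) +
        Real.tanh (ρ / 2) * (1 - Real.tanh (ρ / 2) ^ 2) *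
          deriv (hypF a (a - b + 1 / 2) (b + 1 / 2)) (Real.tanh (ρ / 2) ^ 2))) ρ :=
  hasDerivAt_mul_comp (η := fun ρ => -a * Real.tanh (ρ / 2))
    (φ' := fun ρ => Real.tanh (ρ / 2) * (1 - Real.tanh (ρ / 2) ^ 2))
    (hasDerivAt_one_sub_tanh_half_sq_rpow a ρ) (hasDerivAt_tanh_half_sq ρ)
    (analyticAt_hypF _ _ _ (abs_tanh_sq_lt_one _)).differentiableAt

theorem cosh_div_sinh_eq_tanh_half {ρ : ℝ} (hρ : ρ ≠ 0) :
    Real.cosh ρ / Real.sinh ρ = (1 + Real.tanh (ρ / 2) ^ 2) / (2 * Real.tanh (ρ / 2)) := by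
  have hs : Real.sinh (ρ / 2) ≠ 0 := Real.sinh_ne_zero.2 (div_ne_zero hρ two_ne_zero)
  have hc : Real.cosh (ρ / 2) ≠ 0 := (Real.cosh_pos _).ne'
  obtain ⟨σ, rfl⟩ : ∃ σ, ρ = 2 * σ := ⟨ρ / 2, by ring⟩
  rw [mul_div_cancel_left₀ _ two_ne_zero] at hs hc ⊢
  rw [Real.cosh_two_mul, Real.sinh_two_mul, Real.tanh_eq_sinh_div_cosh]
  field_simp

variable {b}

theorem isRadialEigenfunction_sphericalFunction (hb : 0 < b) :
    IsRadialEigenfunction b (a * (2 * b - a)) (sphericalFunction a b) := by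
  refine isRadialEigenfunction_mul_comp (η := fun ρ => -a * Real.tanh (ρ / 2))
    (φ' := fun ρ => Real.tanh (ρ / 2) * (1 - Real.tanh (ρ / 2) ^ 2))
    (fun ρ _ => hasDerivAt_one_sub_tanh_half_sq_rpow a ρ)
    (fun ρ _ => (hasDerivAt_tanh_half ρ).const_mul (-a))
    (fun ρ _ => hasDerivAt_tanh_half_sq ρ)
    (fun ρ _ => (hasDerivAt_tanh_half ρ).mul ((hasDerivAt_tanh_half_sq ρ).const_sub 1))
    (fun ρ _ => analyticAt_hypF _ _ _ (abs_tanh_sq_lt_one _)) fun ρ hρ => ?_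
  have hode := hypF_hypergeometric_equation a (a - b + 1 / 2)
    (ne_neg_natCast_of_pos (by positivity : 0 < b + 1 / 2)) (abs_tanh_sq_lt_one (ρ / 2))
  have hT : Real.tanh (ρ / 2) ≠ 0 := by
    rw [Real.tanh_eq_sinh_div_cosh]
    exact div_ne_zero (Real.sinh_ne_zero.2 (by positivity)) (Real.cosh_pos _).ne'
  rw [cosh_div_sinh_eq_tanh_half hρ.ne']
  generalize deriv (deriv (hypF a (a - b + 1 / 2) (b + 1 / 2))) (Real.tanh (ρ / 2) ^ 2) = F₂
    at hode ⊢
  generalize deriv (hypF a (a - b + 1 / 2) (b + 1 / 2)) (Real.tanh (ρ / 2) ^ 2) = F₁ at hode ⊢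
  generalize hypF a (a - b + 1 / 2) (b + 1 / 2) (Real.tanh (ρ / 2) ^ 2) = F₀ at hode ⊢
  set T := Real.tanh (ρ / 2)
  field_simp
  linear_combination 2 * (1 - T ^ 2) * hode

variable (b)

theorem tendsto_sphericalFunction_zero : Tendsto (sphericalFunction a b) (𝓝[>] 0) (𝓝 1) := by
  have h := (hasDerivAt_sphericalFunction a b 0).continuousAt.tendsto
  simp only [sphericalFunction, zero_div, Real.tanh_zero, ne_eq, OfNat.ofNat_ne_zero,
    not_false_eq_true, zero_pow, sub_zero, Real.one_rpow, hypF_zero, mul_one] at h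
  exact h.mono_left nhdsWithin_le_nhds

theorem tendsto_deriv_sphericalFunction_zero :
    Tendsto (deriv (sphericalFunction a b)) (𝓝[>] 0) (𝓝 0) := by
  have hF := analyticAt_hypF a (a - b + 1 / 2) (b + 1 / 2) (abs_tanh_sq_lt_one (0 / 2))
  have hT := (hasDerivAt_tanh_half 0).continuousAt
  have hT₂ := (hasDerivAt_tanh_half_sq 0).continuousAt
  have hF₀ := hF.continuousAt.comp (f := fun ρ => Real.tanh (ρ / 2) ^ 2) hT₂
  have hF₁ := hF.deriv.continuousAt.comp (f := fun ρ => Real.tanh (ρ / 2) ^ 2) hT₂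
  have h := ((hasDerivAt_one_sub_tanh_half_sq_rpow a 0).continuousAt.mul
    (((hT.const_mul (-a)).mul hF₀).add ((hT.mul (hT₂.const_sub 1)).mul hF₁))).tendsto
  convert (h.mono_left (nhdsWithin_le_nhds (s := Ioi 0))).congr fun ρ =>
    (hasDerivAt_sphericalFunction a b ρ).deriv.symm using 2
  simp

end Spherical

section Connection

variable {a b : ℝ} {u : ℝ → ℝ}

theorem tendsto_radialWronskian_harishChandraSeries_zero (hb : 0 < b) (ha : ∀ k : ℕ, a ≠ -k)
    (hc : ∀ k : ℕ, a - b + 1 ≠ -k) (hu : Tendsto u (𝓝[>] 0) (𝓝 1))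
    (hu' : Tendsto (deriv u) (𝓝[>] 0) (𝓝 0)) :
    Tendsto (radialWronskian b u (harishChandraSeries a b)) (𝓝[>] 0)
      (𝓝 (-2 * ((1 / 2) ^ (2 * b) * (Real.Gamma (a - b + 1) * Real.Gamma (2 * b) /
        (Real.Gamma a * Real.Gamma b))))) := by
  have h := (hu.mul (tendsto_sinh_rpow_mul_deriv_harishChandraSeries_zero hb ha hc)).sub
    (hu'.mul (tendsto_sinh_rpow_mul_harishChandraSeries_zero hb ha))
  rw [one_mul, zero_mul, sub_zero] at h
  refine h.congr fun ρ => ?_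
  rw [radialWronskian]
  ring

variable (a b) in
/-- Harish-Chandra's c-function: the coefficient of `harishChandraSeries a b` in the expansion of
`sphericalFunction a b`. -/
noncomputable def harishChandraC : ℝ :=
  Real.Gamma (2 * b) * Real.Gamma (b - a) / (Real.Gamma b * Real.Gamma (2 * b - a))

theorem IsRadialEigenfunction.radialWronskian_harishChandraSeries
    (hu : IsRadialEigenfunction b (a * (2 * b - a)) u) (hu₀ : Tendsto u (𝓝[>] 0) (𝓝 1))
    (hu₀' : Tendsto (deriv u) (𝓝[>] 0) (𝓝 0)) (hb : 0 < b) (ha : ∀ k : ℕ, a ≠ -k)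
    (hab : ∀ k : ℕ, a - b ≠ -k) {ρ : ℝ} (hρ : 0 < ρ) :
    radialWronskian b u (harishChandraSeries a b) ρ =
      (1 / 2) ^ (2 * b) * (2 * (b - a)) * harishChandraC (2 * b - a) b := by
  have hc (k : ℕ) : a - b + 1 ≠ -k := fun h => hab (k + 1) (by push_cast; linarith)
  rw [hu.radialWronskian_eq_of_tendsto (isRadialEigenfunction_harishChandraSeries b hc)
      (l := 𝓝[>] 0) eventually_mem_nhdsWithin
      (tendsto_radialWronskian_harishChandraSeries_zero hb ha hc hu₀ hu₀') hρ,
    Real.Gamma_add_one (by simpa using hab 0), harishChandraC,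
    sub_sub_cancel (2 * b) a, show b - (2 * b - a) = a - b by ring]
  ring

theorem IsRadialEigenfunction.eq_harishChandraC_mul_add
    (hu : IsRadialEigenfunction b (a * (2 * b - a)) u) (hu₀ : Tendsto u (𝓝[>] 0) (𝓝 1))
    (hu₀' : Tendsto (deriv u) (𝓝[>] 0) (𝓝 0)) (hb : 0 < b) (ha : ∀ k : ℕ, a ≠ -k)
    (ha' : ∀ k : ℕ, 2 * b - a ≠ -k) (hab : ∀ k : ℕ, a - b ≠ -k) (hba : ∀ k : ℕ, b - a ≠ -k)
    {ρ : ℝ} (hρ : 0 < ρ) :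
    u ρ = harishChandraC a b * harishChandraSeries a b ρ +
      harishChandraC (2 * b - a) b * harishChandraSeries (2 * b - a) b ρ := by
  have hκ : (2 * b - a) * (2 * b - (2 * b - a)) = a * (2 * b - a) := by ring
  have hba' (k : ℕ) : 2 * b - a - b ≠ -k := fun h => hba k (by linarith)
  have hΦ := isRadialEigenfunction_harishChandraSeries (a := a) b
    fun k h => hab (k + 1) (by push_cast; linarith)
  have hΦ' := isRadialEigenfunction_harishChandraSeries (a := 2 * b - a) b
    fun k h => hba (k + 1) (by push_cast; linarith)
  have hW := hΦ.radialWronskian_eq_of_tendsto (hκ ▸ hΦ') (eventually_gt_atTop 0)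
    (tendsto_radialWronskian_harishChandraSeries_atTop a b) hρ
  have hWu := hu.radialWronskian_harishChandraSeries hu₀ hu₀' hb ha hab hρ
  have hWu' := (hκ.symm ▸ hu).radialWronskian_harishChandraSeries hu₀ hu₀' hb ha' hba' hρ
  have hne : (1 / 2 : ℝ) ^ (2 * b) * (2 * (a - b)) ≠ 0 :=
    mul_ne_zero (by positivity) (mul_ne_zero two_ne_zero (by simpa using hab 0))
  have h := radialWronskian_mul_eq (b := b) (f := harishChandraSeries a b)
    (g := harishChandraSeries (2 * b - a) b) u ρ
  rw [hW, hWu, hWu', sub_sub_cancel (2 * b) a] at h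
  apply mul_left_cancel₀ hne
  linear_combination h

theorem harishChandraC_eq_rpow_mul (hb : 0 < b) (hba : ∀ k : ℕ, b + 1 / 2 - a ≠ -k) :
    harishChandraC a b = 4 ^ a * (Real.Gamma (b + 1 / 2) * Real.Gamma (2 * b - 2 * a) /
      (Real.Gamma (b + 1 / 2 - a) * Real.Gamma (2 * b - a))) := by
  have hdup := Real.Gamma_mul_Gamma_add_half b
  have hdup' := Real.Gamma_mul_Gamma_add_half (b - a)
  have hpow : (2 : ℝ) ^ (1 - (2 * b - 2 * a)) = 4 ^ a * 2 ^ (1 - 2 * b) := by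
    rw [show (4 : ℝ) = 2 ^ (2 : ℝ) by norm_num, ← Real.rpow_mul zero_le_two,
      ← Real.rpow_add two_pos]
    ring_nf
  have hΓ := Real.Gamma_ne_zero hba
  have hΓb := (Real.Gamma_pos_of_pos hb).ne'
  rw [sub_add_eq_add_sub, mul_sub, hpow] at hdup'
  have hratio : Real.Gamma (2 * b) * Real.Gamma (b - a) * Real.Gamma (b + 1 / 2 - a) =
      4 ^ a * Real.Gamma (b + 1 / 2) * Real.Gamma (2 * b - 2 * a) * Real.Gamma b := by
    linear_combination Real.Gamma (2 * b) * hdup' - 4 ^ a * Real.Gamma (2 * b - 2 * a) * hdup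
  rw [harishChandraC, mul_div_assoc', ← mul_assoc, ← div_div, ← div_div,
    (div_eq_div_iff hΓb hΓ).2 hratio]

theorem sphericalFunction_eq_harishChandraC_mul_add (hb : 0 < b) (ha : ∀ k : ℕ, a ≠ -k)
    (ha' : ∀ k : ℕ, 2 * b - a ≠ -k) (hab : ∀ k : ℕ, a - b ≠ -k) (hba : ∀ k : ℕ, b - a ≠ -k)
    {ρ : ℝ} (hρ : 0 < ρ) :
    sphericalFunction a b ρ = harishChandraC a b * harishChandraSeries a b ρ +
      harishChandraC (2 * b - a) b * harishChandraSeries (2 * b - a) b ρ :=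
  (isRadialEigenfunction_sphericalFunction a hb).eq_harishChandraC_mul_add
    (tendsto_sphericalFunction_zero a b) (tendsto_deriv_sphericalFunction_zero a b)
    hb ha ha' hab hba hρ

theorem tanh_neg_log_div_two {s : ℝ} (hs : 0 < s) :
    Real.tanh (-Real.log s / 2) = (1 - s) / (1 + s) := by
  have h₁ : Real.log s / 2 + -Real.log s / 2 = 0 := by ring
  have h₂ : Real.log s / 2 + -(-Real.log s / 2) = Real.log s := by ring
  rw [Real.tanh_eq, ← mul_div_mul_left _ _ (Real.exp_ne_zero (Real.log s / 2)), mul_sub, mul_add,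
    ← Real.exp_add, ← Real.exp_add, h₁, h₂, Real.exp_zero, Real.exp_log hs]

theorem harishChandraC_mul_harishChandraSeries_neg_log (hb : 0 < b)
    (hba : ∀ k : ℕ, b + 1 / 2 - a ≠ -k) {s : ℝ} (hs : 0 < s) :
    harishChandraC a b * harishChandraSeries a b (-Real.log s) =
      Real.Gamma (b + 1 / 2) * Real.Gamma (2 * b - 2 * a) /
        (Real.Gamma (b + 1 / 2 - a) * Real.Gamma (2 * b - a)) *
      (4 * s) ^ a * hypF a b (a - b + 1) (s ^ 2) := by
  have hexp (m : ℝ) : Real.exp (-m * -Real.log s) = s ^ m := by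
    rw [Real.rpow_def_of_pos hs]
    ring_nf
  rw [harishChandraSeries, hexp, hexp, Real.rpow_two, harishChandraC_eq_rpow_mul hb hba,
    Real.mul_rpow (by norm_num) hs.le]
  ring

end Connection

theorem statement13_general {n lam : ℝ} (hn : 1 < n) (h1 : ∀ k : ℕ, lam ≠ -(k : ℝ))
    (h4 : ∀ k : ℕ, n - lam - 1 ≠ -(k : ℝ)) (h5 : ∀ k : ℕ, n - 2 * lam - 1 ≠ -(k : ℝ))
    (h6 : ∀ k : ℕ, 2 * lam - n + 1 ≠ -(k : ℝ)) {s : ℝ} (hs₀ : 0 < s) (hs₁ : s < 1) :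
    (1 - ((1 - s) / (1 + s)) ^ 2) ^ lam *
        hypF lam (lam - n / 2 + 1) (n / 2) (((1 - s) / (1 + s)) ^ 2) =
      Real.Gamma (n / 2) * Real.Gamma (n - 2 * lam - 1) /
            (Real.Gamma (n / 2 - lam) * Real.Gamma (n - lam - 1)) *
          (4 * s) ^ lam * hypF lam ((n - 1) / 2) (lam - (n - 3) / 2) (s ^ 2) +
        Real.Gamma (n / 2) * Real.Gamma (2 * lam - n + 1) /
            (Real.Gamma lam * Real.Gamma (lam - n / 2 + 1)) *
          (4 * s) ^ (n - 1 - lam) *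
          hypF ((n - 1) / 2) (n - lam - 1) ((n + 1) / 2 - lam) (s ^ 2) := by
  obtain ⟨b, rfl⟩ : ∃ b, n = 2 * b + 1 := ⟨(n - 1) / 2, by ring⟩
  have hb : 0 < b := by linarith
  have hρ : 0 < -Real.log s := neg_pos.2 (Real.log_neg hs₀ hs₁)
  have h := sphericalFunction_eq_harishChandraC_mul_add (a := lam) hb h1
    (fun k h => h4 k (by linarith))
    (fun k h => h6 (2 * k) (by push_cast; linarith))
    (fun k h => h5 (2 * k) (by push_cast; linarith)) hρ
  rw [sphericalFunction, tanh_neg_log_div_two hs₀,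
    harishChandraC_mul_harishChandraSeries_neg_log hb
      (fun k h => h5 (2 * k + 1) (by push_cast; linarith)) hs₀,
    harishChandraC_mul_harishChandraSeries_neg_log hb
      (fun k h => h6 (2 * k + 1) (by push_cast; linarith)) hs₀,
    hypF_comm (2 * b - lam)] at h
  convert h using 3 <;> ring_nf

theorem statement13 (n : ℕ) (hn : 2 ≤ n) (lam : ℝ)
    (h1 : ∀ k : ℕ, lam ≠ -(k : ℝ))
    (h2 : ∀ k : ℕ, lam - (n : ℝ) / 2 + 1 ≠ -(k : ℝ))
    (h3 : ∀ k : ℕ, (n : ℝ) / 2 - lam ≠ -(k : ℝ))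
    (h4 : ∀ k : ℕ, (n : ℝ) - lam - 1 ≠ -(k : ℝ))
    (h5 : ∀ k : ℕ, (n : ℝ) - 2 * lam - 1 ≠ -(k : ℝ))
    (h6 : ∀ k : ℕ, 2 * lam - (n : ℝ) + 1 ≠ -(k : ℝ))
    (h7 : ∀ k : ℕ, lam - ((n : ℝ) - 3) / 2 ≠ -(k : ℝ))
    (h8 : ∀ k : ℕ, ((n : ℝ) + 1) / 2 - lam ≠ -(k : ℝ))
    (A B : ℝ)
    (hA : A = Real.Gamma ((n : ℝ) / 2) * Real.Gamma ((n : ℝ) - 2 * lam - 1) /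
      (Real.Gamma ((n : ℝ) / 2 - lam) * Real.Gamma ((n : ℝ) - lam - 1)))
    (hB : B = Real.Gamma ((n : ℝ) / 2) * Real.Gamma (2 * lam - (n : ℝ) + 1) /
      (Real.Gamma lam * Real.Gamma (lam - (n : ℝ) / 2 + 1))) :
    ∀ s : ℝ, 0 < s → s < 1 →
      letI r : ℝ := (1 - s) / (1 + s)
      (1 - r ^ 2) ^ lam * hypF lam (lam - (n : ℝ) / 2 + 1) ((n : ℝ) / 2) (r ^ 2) =
        A * (4 * s) ^ lam *
            hypF lam (((n : ℝ) - 1) / 2) (lam - ((n : ℝ) - 3) / 2) (s ^ 2) +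
          B * (4 * s) ^ ((n : ℝ) - 1 - lam) *
            hypF (((n : ℝ) - 1) / 2) ((n : ℝ) - lam - 1) (((n : ℝ) + 1) / 2 - lam) (s ^ 2) := by
  intro s hs₀ hs₁
  subst hA hB
  exact statement13_general (by exact_mod_cast hn) h1 h4 h5 h6 hs₀ hs₁
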